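/- arXiv:1911.12432 — 5 statements merged into one kernel-verified Lean document; each statement's English description precedes it below -/
import Mathlib

section
/- Suppose s ∈ S has degree at least 2d and st is a minimum-weight edge incident to s. Then for every perfect d-distance matching M of G there exists a perfect d-distance matching M' of G with st ∉ M' and w(M') ≥ w(M); consequently, deleting st from E does not change the maximum weight of a perfect d-distance matching. -/
open Finset

/-- `M` is a `d`-distance matching of the bipartite graph with left node set `Fin n`
(ordered) and right node set `T`, whose edge set is `E`. -/
def DDM {n : ℕ} {T : Type*} [DecidableEq T] (d : ℕ) (E M : Finset (Fin n × T)) : Prop :=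
  M ⊆ E ∧ (∀ e ∈ M, ∀ f ∈ M, e.1 = f.1 → e = f) ∧
    (∀ e ∈ M, ∀ f ∈ M, e.2 = f.2 → e ≠ f → d ≤ Nat.dist e.1.val f.1.val)

/-- A perfect `d`-distance matching covers every node of `S = Fin n`. -/
def PerfectDDM {n : ℕ} {T : Type*} [DecidableEq T] (d : ℕ) (E M : Finset (Fin n × T)) : Prop :=
  DDM d E M ∧ ∀ i : Fin n, ∃ t, (i, t) ∈ M

/-!
Suppose `M` uses `st`. It has at most `2d - 1` edges at nodes at distance less than `d` from `s`, so
some neighbour `t'` of `s`, of which there are at least `2d`, is on none of them. Since `st` is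
itself one of these edges, `t' ≠ t`, and rematching `s` to `t'` gives a perfect `d`-distance
matching that is no lighter, by minimality of `w(st)`.
-/

theorem card_filter_dist_lt_le {n : ℕ} (s : Fin n) (d : ℕ) :
    #{i : Fin n | Nat.dist i s < d} ≤ 2 * d - 1 := by
  have mem_Ico_of_dist_lt (i : Fin n) (hi : Nat.dist i s < d) :
      i.val ∈ Ico (s + 1 - d : ℕ) (s + d) := by
    rw [Nat.dist] at hi
    rw [mem_Ico]
    omega
  calc #{i : Fin n | Nat.dist i s < d}
      ≤ #(Ico (s + 1 - d : ℕ) (s + d)) :=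
        card_le_card_of_injOn Fin.val (fun i hi => mem_Ico_of_dist_lt i (mem_filter_univ i |>.1 hi))
          Fin.val_injective.injOn
    _ ≤ 2 * d - 1 := by
        rw [Nat.card_Ico]
        omega

section FreeAt

variable {n d : ℕ} {T : Type*} {E M : Finset (Fin n × T)} {s : Fin n} {t : T}

/-- The node `t` is free at `s` if no edge of `M` joins `t` to a node at distance less than `d` from
`s`. The node `s` itself counts, so for `d ≥ 1` the partner of `s` in `M` is not free at `s`. -/
def FreeAt (d : ℕ) (M : Finset (Fin n × T)) (s : Fin n) (t : T) : Prop :=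
  ∀ i, (i, t) ∈ M → d ≤ Nat.dist i s

theorem not_freeAt_of_mem (hd : 1 ≤ d) (hst : (s, t) ∈ M) : ¬FreeAt d M s t := by
  intro hfree
  have := hfree s hst
  rw [Nat.dist_self] at this
  omega

theorem exists_mem_freeAt (hM : Set.InjOn Prod.fst (M : Set (Fin n × T)))
    (hdeg : #{i : Fin n | Nat.dist i s < d} < #{e ∈ E | e.1 = s}) :
    ∃ t, (s, t) ∈ E ∧ FreeAt d M s t := by
  by_contra! hblocked
  refine hdeg.not_ge
    (card_le_card_of_forall_subsingleton (fun e i => (i, e.2) ∈ M) ?exists_blocker ?blocks_one)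
  case exists_blocker =>
    rintro ⟨_, u⟩ hu
    obtain ⟨huE, rfl⟩ := mem_filter.1 hu
    have hnot_free := hblocked u huE
    simp only [FreeAt, not_forall, not_le] at hnot_free
    obtain ⟨i, hiM, hi⟩ := hnot_free
    exact ⟨i, mem_filter_univ i |>.2 hi, hiM⟩
  case blocks_one =>
    rintro i - ⟨a, u⟩ ⟨hu, huM⟩ ⟨b, v⟩ ⟨hv, hvM⟩
    have huv : (i, u) = (i, v) := hM huM hvM rfl
    exact Prod.ext ((mem_filter.1 hu).2.trans (mem_filter.1 hv).2.symm) (Prod.ext_iff.1 huv).2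

end FreeAt

section Reassign

variable {n d : ℕ} {T : Type*} [DecidableEq T] {E E' M : Finset (Fin n × T)} {s : Fin n} {t t' : T}

/-- The edge set obtained from `M` by replacing all edges at `s` with the single edge `st`. -/
def reassign (M : Finset (Fin n × T)) (s : Fin n) (t : T) : Finset (Fin n × T) :=
  insert (s, t) {e ∈ M | e.1 ≠ s}

theorem mem_reassign {e : Fin n × T} :
    e ∈ reassign M s t ↔ e = (s, t) ∨ e ∈ M ∧ e.1 ≠ s := by
  rw [reassign, mem_insert, mem_filter]

theorem mk_mem_reassign_iff : (s, t') ∈ reassign M s t ↔ t' = t := by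
  simp [mem_reassign]

theorem reassign_eq_self (hM : Set.InjOn Prod.fst (M : Set (Fin n × T))) (hst : (s, t) ∈ M) :
    reassign M s t = M := by
  ext e
  rw [mem_reassign]
  constructor
  · rintro (rfl | ⟨he, -⟩)
    exacts [hst, he]
  · intro he
    by_cases hes : e.1 = s
    · exact .inl (hM he hst hes)
    · exact .inr ⟨he, hes⟩

theorem sum_reassign {R : Type*} [AddCommMonoid R] (w : Fin n × T → R) :
    ∑ e ∈ reassign M s t, w e = w (s, t) + ∑ e ∈ M with e.1 ≠ s, w e :=
  sum_insert (by simp)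

theorem sum_le_sum_reassign {R : Type*} [AddCommMonoid R] [PartialOrder R] [IsOrderedAddMonoid R]
    {w : Fin n × T → R} (hM : Set.InjOn Prod.fst (M : Set (Fin n × T))) (hst : (s, t) ∈ M)
    (hw : w (s, t) ≤ w (s, t')) : ∑ e ∈ M, w e ≤ ∑ e ∈ reassign M s t', w e :=
  calc ∑ e ∈ M, w e
      = w (s, t) + ∑ e ∈ M with e.1 ≠ s, w e := by rw [← sum_reassign, reassign_eq_self hM hst]
    _ ≤ w (s, t') + ∑ e ∈ M with e.1 ≠ s, w e := by gcongr
    _ = ∑ e ∈ reassign M s t', w e := (sum_reassign w).symm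

theorem DDM.injOn_fst (hM : DDM d E M) : Set.InjOn Prod.fst (M : Set (Fin n × T)) :=
  fun e he f hf => hM.2.1 e he f hf

theorem DDM.reassign (hM : DDM d E M) (hst : (s, t) ∈ E) (hfree : FreeAt d M s t) :
    DDM d E (reassign M s t) := by
  obtain ⟨hsub, hfun, hdist⟩ := hM
  refine ⟨fun e he => ?_, fun e he f hf hef => ?_, fun e he f hf hef hne => ?_⟩
  · rcases mem_reassign.1 he with rfl | ⟨heM, -⟩
    exacts [hst, hsub heM]
  · rcases mem_reassign.1 he with rfl | ⟨heM, hes⟩ <;>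
      rcases mem_reassign.1 hf with rfl | ⟨hfM, hfs⟩
    · rfl
    · exact absurd hef.symm hfs
    · exact absurd hef hes
    · exact hfun e heM f hfM hef
  · rcases mem_reassign.1 he with rfl | ⟨heM, -⟩ <;>
      rcases mem_reassign.1 hf with rfl | ⟨hfM, -⟩
    · exact absurd rfl hne
    · obtain rfl : t = f.2 := hef
      rw [Nat.dist_comm]
      exact hfree f.1 hfM
    · obtain rfl : e.2 = t := hef
      exact hfree e.1 heM
    · exact hdist e heM f hfM hef hne

theorem PerfectDDM.reassign (hM : PerfectDDM d E M) (hst : (s, t) ∈ E) (hfree : FreeAt d M s t) :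
    PerfectDDM d E (reassign M s t) := by
  refine ⟨hM.1.reassign hst hfree, fun i => ?_⟩
  by_cases his : i = s
  · exact ⟨t, mem_reassign.2 (.inl (by rw [his]))⟩
  · obtain ⟨u, hu⟩ := hM.2 i
    exact ⟨u, mem_reassign.2 (.inr ⟨hu, his⟩)⟩

theorem PerfectDDM.of_subset (hM : PerfectDDM d E M) (hsub : M ⊆ E') : PerfectDDM d E' M :=
  ⟨⟨hsub, hM.1.2⟩, hM.2⟩

theorem PerfectDDM.exists_notMem_sum_le {R : Type*} [AddCommMonoid R] [PartialOrder R]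
    [IsOrderedAddMonoid R] {w : Fin n × T → R} (hM : PerfectDDM d E M) (hd : 1 ≤ d)
    (hdeg : #{i : Fin n | Nat.dist i s < d} < #{e ∈ E | e.1 = s})
    (hmin : ∀ e ∈ E, e.1 = s → w (s, t) ≤ w e) :
    ∃ M', PerfectDDM d E M' ∧ (s, t) ∉ M' ∧ ∑ e ∈ M, w e ≤ ∑ e ∈ M', w e := by
  by_cases hst : (s, t) ∈ M
  · obtain ⟨t', ht', hfree⟩ := exists_mem_freeAt hM.1.injOn_fst hdeg
    have hne : t ≠ t' := by
      rintro rfl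
      exact not_freeAt_of_mem hd hst hfree
    exact ⟨_, hM.reassign ht' hfree, mt mk_mem_reassign_iff.1 hne,
      sum_le_sum_reassign hM.1.injOn_fst hst (hmin _ ht' rfl)⟩
  · exact ⟨M, hM, hst, le_rfl⟩

end Reassign

theorem stmt1_general {n : ℕ} {T : Type*} [DecidableEq T] {R : Type*} [AddCommMonoid R]
    [PartialOrder R] [IsOrderedAddMonoid R] (d : ℕ) (hd : 1 ≤ d) (E : Finset (Fin n × T))
    (w : Fin n × T → R) (s : Fin n) (t : T)
    (hdeg : #{i : Fin n | Nat.dist i s < d} < #{e ∈ E | e.1 = s})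
    (hmin : ∀ e ∈ E, e.1 = s → w (s, t) ≤ w e) :
    (∀ M, PerfectDDM d E M → ∃ M', PerfectDDM d E M' ∧ (s, t) ∉ M' ∧
      ∑ e ∈ M, w e ≤ ∑ e ∈ M', w e) ∧
    (∀ M, PerfectDDM d E M → ∃ M', PerfectDDM d (E.erase (s, t)) M' ∧
      ∑ e ∈ M, w e ≤ ∑ e ∈ M', w e) := by
  refine ⟨fun M hM => hM.exists_notMem_sum_le hd hdeg hmin, fun M hM => ?_⟩
  obtain ⟨M', hM', hst, hle⟩ := hM.exists_notMem_sum_le hd hdeg hmin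
  exact ⟨M', hM'.of_subset (subset_erase.2 ⟨hM'.1.1, hst⟩), hle⟩

/-- If `s` has degree at least `2d` and `st` is a minimum-weight edge at `s`, then every
perfect `d`-distance matching can be replaced by one avoiding `st` of no smaller weight;
consequently, deleting `st` does not change the maximum weight of a perfect `d`-distance
matching. -/
theorem stmt1 {n : ℕ} {T : Type*} [DecidableEq T]
    (d : ℕ) (hd : 1 ≤ d) (E : Finset (Fin n × T)) (w : Fin n × T → ℝ)
    (hw : ∀ e ∈ E, 0 ≤ w e)
    (s : Fin n) (t : T) (hst : (s, t) ∈ E)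
    (hdeg : 2 * d ≤ (E.filter (fun e => e.1 = s)).card)
    (hmin : ∀ e ∈ E, e.1 = s → w (s, t) ≤ w e) :
    (∀ M, PerfectDDM d E M → ∃ M', PerfectDDM d E M' ∧ (s, t) ∉ M' ∧
      ∑ e ∈ M, w e ≤ ∑ e ∈ M', w e) ∧
    (∀ M, PerfectDDM d E M → ∃ M', PerfectDDM d (E.erase (s, t)) M' ∧
      ∑ e ∈ M, w e ≤ ∑ e ∈ M', w e) := by
  exact stmt1_general d hd E w s t ((card_filter_dist_lt_le s d).trans_lt (by omega)) hmin
end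

section
/- For every d-distance matching M and every edge e* = s_i t ∈ E, there is a unique inclusion-wise minimal subset H(e*,M) ⊆ M such that (M ∖ H(e*,M)) ∪ {e*} is a d-distance matching; namely H(e*,M) consists of the edges of M incident to s_i together with the edges s_j t ∈ M with 0 < |j−i| < d, and consequently |H(e*,M)| ≤ 3 (at most one edge at s_i and at most two edges s_j t with s_j ∈ L_d(s_i)∪R_d(s_i)). -/
open Finset

/-!
A `d`-distance matching is an independent set of the graph in which two edges are joined when they
conflict. Adding a vertex `e` to an independent set `M` forces out exactly the neighbours of `e` in
`M`, so these form the least removable set. The neighbours of `e = s_i t` are covered by three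
cliques, according to whether their `S`-node comes before, at or after `s_i`, and an independent set
meets each clique in at most one vertex.
-/

section IndepSet

variable {V : Type*} {G : SimpleGraph V}

theorem isIndepSet_insert_sdiff_iff {M : Set V} (hM : G.IsIndepSet M) (v : V) (H : Set V) :
    G.IsIndepSet (insert v (M \ H)) ↔ M ∩ G.neighborSet v ⊆ H := by
  have : Std.Symm fun u w => ¬G.Adj u w := ⟨fun _ _ => mt SimpleGraph.Adj.symm⟩
  have hsdiff : (M \ H).Pairwise fun u w => ¬G.Adj u w := hM.mono Set.sdiff_subset
  rw [SimpleGraph.IsIndepSet, Set.pairwise_insert_of_symm, and_iff_right hsdiff]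
  constructor
  · rintro hv w ⟨hwM, hvw⟩
    by_contra hwH
    exact hv w ⟨hwM, hwH⟩ (G.ne_of_adj hvw) hvw
  · rintro hsub w ⟨hwM, hwH⟩ - hvw
    exact hwH (hsub ⟨hwM, hvw⟩)

theorem card_le_card_of_isIndepSet_of_isClique_fibers {ι : Type*} [Fintype ι] {s : Finset V}
    (hs : G.IsIndepSet s) (c : V → ι) (hc : ∀ a, G.IsClique {v | v ∈ s ∧ c v = a}) :
    s.card ≤ Fintype.card ι := by
  refine card_le_card_of_injOn c (fun _ _ => mem_univ _) fun u hu w hw huw => ?_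
  by_contra hne
  exact hs hu hw hne (hc (c w) ⟨hu, huw⟩ ⟨hw, rfl⟩ hne)

end IndepSet

theorem nat_dist_lt_of_compare_eq {a b c d : ℕ} (hab : compare a c = compare b c)
    (ha : Nat.dist a c < d) (hb : Nat.dist b c < d) : Nat.dist a b < d := by
  have hlt : a < c ↔ b < c := by rw [← compare_lt_iff_lt, hab, compare_lt_iff_lt]
  unfold Nat.dist at *
  omega

/-- The graph on the pairs `(s, t)` in which two distinct pairs are adjacent when no `d`-distance
matching contains both; `d`-distance matchings are its independent sets. -/
def conflictGraph (n : ℕ) (T : Type*) (d : ℕ) : SimpleGraph (Fin n × T) where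
  Adj e f := e ≠ f ∧ (e.1 = f.1 ∨ e.2 = f.2 ∧ Nat.dist e.1 f.1 < d)
  symm := ⟨fun e f ⟨hne, h⟩ =>
    ⟨hne.symm, h.imp Eq.symm fun ⟨ht, hlt⟩ => ⟨ht.symm, Nat.dist_comm e.1 f.1 ▸ hlt⟩⟩⟩
  loopless := ⟨fun _ h => h.1 rfl⟩

section Conflict

variable {n : ℕ} {T : Type*} {d : ℕ}

theorem conflictGraph_adj_iff_of_ne {i : Fin n} {t : T} {f : Fin n × T} (hf : f ≠ (i, t)) :
    (conflictGraph n T d).Adj (i, t) f ↔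
      f.1 = i ∨ (f.2 = t ∧ f.1 ≠ i ∧ Nat.dist f.1 i < d) := by
  simp only [conflictGraph, Nat.dist_comm i f.1, eq_comm (a := i), eq_comm (a := t)]
  tauto

theorem conflictGraph_adj_of_compare_eq {e f g : Fin n × T}
    (hf : (conflictGraph n T d).Adj e f) (hg : (conflictGraph n T d).Adj e g) (hne : f ≠ g)
    (hfg : compare f.1 e.1 = compare g.1 e.1) : (conflictGraph n T d).Adj f g := by
  have hiff : f.1 = e.1 ↔ g.1 = e.1 := by rw [← compare_eq_iff_eq, hfg, compare_eq_iff_eq]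
  refine ⟨hne, ?_⟩
  rcases hf.symm.2 with hfe | ⟨hft, hfd⟩
  · exact .inl (hfe.trans (hiff.mp hfe).symm)
  rcases hg.symm.2 with hge | ⟨hgt, hgd⟩
  · exact .inl ((hiff.mpr hge).trans hge.symm)
  · exact .inr ⟨hft.trans hgt.symm, nat_dist_lt_of_compare_eq hfg hfd hgd⟩

theorem card_le_three_of_isIndepSet_of_subset_neighborSet {e : Fin n × T}
    {s : Finset (Fin n × T)} (hs : (conflictGraph n T d).IsIndepSet s)
    (hse : ↑s ⊆ (conflictGraph n T d).neighborSet e) : s.card ≤ 3 :=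
  card_le_card_of_isIndepSet_of_isClique_fibers hs (fun f => compare f.1 e.1)
    fun _ _ ⟨hf, hfa⟩ _ ⟨hg, hga⟩ hne =>
      conflictGraph_adj_of_compare_eq (hse hf) (hse hg) hne (hfa.trans hga.symm)

variable [DecidableEq T] {E M : Finset (Fin n × T)}

theorem ddm_iff_subset_and_isIndepSet :
    DDM d E M ↔ M ⊆ E ∧ (conflictGraph n T d).IsIndepSet M := by
  refine and_congr_right fun _ => ⟨?_, fun h => ⟨?_, ?_⟩⟩
  · rintro ⟨hleft, hdist⟩ e he f hf hne ⟨-, heq | ⟨ht, hlt⟩⟩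
    · exact hne (hleft e he f hf heq)
    · exact hlt.not_ge (hdist e he f hf ht hne)
  · intro e he f hf heq
    by_contra hne
    exact h he hf hne ⟨hne, .inl heq⟩
  · intro e he f hf ht hne
    by_contra! hlt
    exact h he hf hne ⟨hne, .inr ⟨ht, hlt⟩⟩

theorem ddm_sdiff_union_singleton_iff (hM : DDM d E M) {e : Fin n × T} (he : e ∈ E)
    (H : Finset (Fin n × T)) :
    DDM d E ((M \ H) ∪ {e}) ↔ (M : Set _) ∩ (conflictGraph n T d).neighborSet e ⊆ H := by
  obtain ⟨hME, hMindep⟩ := ddm_iff_subset_and_isIndepSet.mp hM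
  have hE : (M \ H) ∪ {e} ⊆ E :=
    union_subset (sdiff_subset.trans hME) (singleton_subset_iff.mpr he)
  rw [ddm_iff_subset_and_isIndepSet, and_iff_right hE, ← isIndepSet_insert_sdiff_iff hMindep]
  simp only [coe_union, coe_sdiff, coe_singleton, Set.union_singleton]

end Conflict

/-- For a `d`-distance matching `M` and an edge `e* = (i, t) ∈ E ∖ M`, the set
`H = {f ∈ M : f is incident to s_i, or f = s_j t with 0 < |j − i| < d}` satisfies:
`(M ∖ H) ∪ {e*}` is a `d`-distance matching, `H` is contained in every `H' ⊆ M` with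
`(M ∖ H') ∪ {e*}` a `d`-distance matching (hence `H` is the unique inclusion-wise
minimal such set), and `|H| ≤ 3`. -/
theorem stmt3 {n : ℕ} {T : Type*} [DecidableEq T]
    (d : ℕ) (hd : 1 ≤ d) (E M : Finset (Fin n × T)) (hM : DDM d E M)
    (i : Fin n) (t : T) (heE : (i, t) ∈ E) (heM : (i, t) ∉ M)
    (H : Finset (Fin n × T))
    (hH : H = M.filter
      (fun f => f.1 = i ∨ (f.2 = t ∧ f.1 ≠ i ∧ Nat.dist f.1.val i.val < d))) :
    DDM d E ((M \ H) ∪ {(i, t)}) ∧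
    (∀ H' ⊆ M, DDM d E ((M \ H') ∪ {(i, t)}) → H ⊆ H') ∧
    H.card ≤ 3 := by
  have hcoe : (H : Set (Fin n × T)) = ↑M ∩ (conflictGraph n T d).neighborSet (i, t) := by
    ext f
    rw [hH, coe_filter]
    exact and_congr_right fun hf => (conflictGraph_adj_iff_of_ne (ne_of_mem_of_not_mem hf heM)).symm
  have hHindep : (conflictGraph n T d).IsIndepSet H :=
    (ddm_iff_subset_and_isIndepSet.mp hM).2.mono (hcoe ▸ Set.inter_subset_left)
  refine ⟨(ddm_sdiff_union_singleton_iff hM heE H).mpr hcoe.ge, fun H' _ hH' => ?_, ?_⟩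
  · exact coe_subset.mp (hcoe.trans_subset ((ddm_sdiff_union_singleton_iff hM heE H').mp hH'))
  · exact card_le_three_of_isIndepSet_of_subset_neighborSet hHindep
      (hcoe.trans_subset Set.inter_subset_right)
end

section
/- If M and M* are d-distance matchings of G, then every edge e ∈ M belongs to H(e*,M) for at most three edges e* ∈ M*; consequently Σ_{e*∈M*} |H(e*,M)| ≤ 3|M|. -/
open Finset

/-- The hit set `H(e, M)`: the inclusion-wise minimal subset of the `d`-distance
matching `M` whose removal makes `M ∪ {e}` a feasible `d`-distance matching; explicitly,
the edges of `M` (other than `e` itself) sharing the `S`-node with `e`, together with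
the edges of `M` at the same `T`-node whose `S`-node is at distance `< d`. -/
def hitSet {n : ℕ} {T : Type*} [DecidableEq T] (d : ℕ) (M : Finset (Fin n × T))
    (e : Fin n × T) : Finset (Fin n × T) :=
  (M.filter
    (fun f => f.1 = e.1 ∨ (f.2 = e.2 ∧ f.1 ≠ e.1 ∧ Nat.dist f.1.val e.1.val < d))).erase e

/-! Fix an edge `e = s t`. The edges `e*` of a `d`-distance matching whose hit set contains `e`
are told apart by the position of their `S`-node relative to `s`: at most one of them is incident
to `s`, and any other one meets `t` within distance less than `d` of `s`, so that two of them on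
the same side of `s` would be at distance less than `d` from each other. Summing over `e` gives
the bound on the total size of the hit sets. -/

theorem sum_card_le_mul_card_of_forall_card_filter_mem_le {ι α : Type*} [DecidableEq α]
    {s : Finset ι} {t : Finset α} {F : ι → Finset α} {k : ℕ} (hF : ∀ i ∈ s, F i ⊆ t)
    (hk : ∀ a ∈ t, #{i ∈ s | a ∈ F i} ≤ k) : ∑ i ∈ s, #(F i) ≤ k * #t := by
  have bipartiteAbove_eq (i : ι) (hi : i ∈ s) : t.bipartiteAbove (fun i a ↦ a ∈ F i) i = F i :=
    filter_mem_eq_inter.trans (inter_eq_right.mpr (hF i hi))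
  calc ∑ i ∈ s, #(F i)
      = ∑ i ∈ s, #(t.bipartiteAbove (fun i a ↦ a ∈ F i) i) :=
        sum_congr rfl fun i hi ↦ by rw [bipartiteAbove_eq i hi]
    _ = ∑ a ∈ t, #{i ∈ s | a ∈ F i} := sum_card_bipartiteAbove_eq_sum_card_bipartiteBelow _
    _ ≤ #t * k := sum_le_card_nsmul t _ k hk
    _ = k * #t := mul_comm _ _

theorem dist_lt_of_compare_eq_compare {a b c d : ℕ} (h : compare a c = compare b c)
    (ha : Nat.dist c a < d) (hb : Nat.dist c b < d) : Nat.dist a b < d := by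
  simp only [Nat.dist] at ha hb ⊢
  rcases lt_trichotomy a c with hac | rfl | hca
  · have hbc : b < c := compare_lt_iff_lt.mp (h ▸ compare_lt_iff_lt.mpr hac)
    omega
  · exact hb
  · have hcb : c < b := compare_gt_iff_gt.mp (h ▸ compare_gt_iff_gt.mpr hca)
    omega

section HitSet

variable {n : ℕ} {T : Type*} [DecidableEq T] {d : ℕ} {E M Ms : Finset (Fin n × T)}
  {e f g : Fin n × T}

theorem hitSet_subset : hitSet d M f ⊆ M :=
  (erase_subset _ _).trans (filter_subset _ _)

theorem snd_eq_and_dist_lt_of_mem_hitSet (he : e ∈ hitSet d M f) (hne : f.1 ≠ e.1) :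
    e.2 = f.2 ∧ Nat.dist e.1 f.1 < d :=
  have ⟨hsnd, _, hdist⟩ := (mem_filter.mp (mem_of_mem_erase he)).2.resolve_left hne.symm
  ⟨hsnd, hdist⟩

theorem DDM.eq_of_fst_eq (hM : DDM d E M) (hf : f ∈ M) (hg : g ∈ M) (h : f.1 = g.1) : f = g :=
  hM.2.1 f hf g hg h

theorem DDM.eq_of_snd_eq_of_dist_lt (hM : DDM d E M) (hf : f ∈ M) (hg : g ∈ M)
    (h : f.2 = g.2) (hdist : Nat.dist f.1 g.1 < d) : f = g :=
  by_contra fun hne ↦ hdist.not_ge (hM.2.2 f hf g hg h hne)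

theorem DDM.injOn_compare_fst (hMs : DDM d E Ms) (e : Fin n × T) :
    Set.InjOn (fun f : Fin n × T ↦ compare (f.1 : ℕ) e.1)
      ({f ∈ Ms | e ∈ hitSet d M f} : Finset (Fin n × T)) := by
  intro f hf g hg (hfg : compare (f.1 : ℕ) e.1 = compare (g.1 : ℕ) e.1)
  obtain ⟨hfMs, hef⟩ := mem_filter.mp hf
  obtain ⟨hgMs, heg⟩ := mem_filter.mp hg
  have fst_eq_iff : f.1 = e.1 ↔ g.1 = e.1 := by
    rw [Fin.ext_iff, Fin.ext_iff, ← compare_eq_iff_eq, hfg, compare_eq_iff_eq]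
  by_cases hfe : f.1 = e.1
  · exact hMs.eq_of_fst_eq hfMs hgMs (hfe.trans (fst_eq_iff.mp hfe).symm)
  · obtain ⟨hef_snd, hef_dist⟩ := snd_eq_and_dist_lt_of_mem_hitSet hef hfe
    obtain ⟨heg_snd, heg_dist⟩ := snd_eq_and_dist_lt_of_mem_hitSet heg (mt fst_eq_iff.mpr hfe)
    exact hMs.eq_of_snd_eq_of_dist_lt hfMs hgMs (hef_snd.symm.trans heg_snd)
      (dist_lt_of_compare_eq_compare hfg hef_dist heg_dist)

theorem DDM.card_filter_mem_hitSet_le_three (hMs : DDM d E Ms) (e : Fin n × T) :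
    #{f ∈ Ms | e ∈ hitSet d M f} ≤ 3 :=
  card_le_card_of_injOn (t := (univ : Finset Ordering)) _ (fun _ _ ↦ mem_univ _)
    (hMs.injOn_compare_fst e)

end HitSet

theorem stmt4_general {n : ℕ} {T : Type*} [DecidableEq T] (d : ℕ) (E M Ms : Finset (Fin n × T))
    (hMs : DDM d E Ms) :
    (∀ e, #{f ∈ Ms | e ∈ hitSet d M f} ≤ 3) ∧ ∑ f ∈ Ms, #(hitSet d M f) ≤ 3 * #M :=
  ⟨hMs.card_filter_mem_hitSet_le_three,
    sum_card_le_mul_card_of_forall_card_filter_mem_le (fun _ _ ↦ hitSet_subset)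
      fun e _ ↦ hMs.card_filter_mem_hitSet_le_three e⟩

/-- If `M` and `M*` are `d`-distance matchings, then every edge `e ∈ M` lies in
`H(e*, M)` for at most three edges `e* ∈ M*`; consequently
`Σ_{e* ∈ M*} |H(e*, M)| ≤ 3|M|`. -/
theorem stmt4 {n : ℕ} {T : Type*} [DecidableEq T]
    (d : ℕ) (hd : 1 ≤ d) (E M Ms : Finset (Fin n × T))
    (hM : DDM d E M) (hMs : DDM d E Ms) :
    (∀ e ∈ M, (Ms.filter (fun f => e ∈ hitSet d M f)).card ≤ 3) ∧
    ∑ f ∈ Ms, (hitSet d M f).card ≤ 3 * M.card :=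
  have ⟨card_le, sum_le⟩ := stmt4_general d E M Ms hMs
  ⟨fun e _ ↦ card_le e, sum_le⟩
end

section
/- The integrality gap of LP1 is at most 2 − 1/(2d−1): for every weight function w : E → ℝ₊, the optimum value of LP1 is at most (2 − 1/(2d−1)) times the maximum weight of a d-distance matching of G. -/
open Finset

/-- `x` is a feasible solution of LP1. -/
def FeasLP1 {n : ℕ} {T : Type*} [DecidableEq T]
    (d : ℕ) (E : Finset (Fin n × T)) (x : Fin n × T → ℝ) : Prop :=
  (∀ e, 0 ≤ x e) ∧ (∀ e ∉ E, x e = 0) ∧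
  (∀ s : Fin n, ∑ e ∈ E.filter (fun e => e.1 = s), x e ≤ 1) ∧
  (∀ s : Fin n, ∀ t : T,
    ∑ e ∈ E.filter (fun e => e.2 = t ∧ s.val ≤ e.1.val ∧ e.1.val < s.val + d), x e ≤ 1)

/-!
Cut `S`, after a shift, into consecutive groups of `2d - 1` nodes, and keep only the edges at
the first `d` nodes of each group. Split every `t ∈ T` into one copy per group. An LP1 solution
restricted to the kept edges is a fractional matching of the split graph, because the kept nodes of
one group fit into a single `R_d(s)`; conversely a matching of the split graph is a `d`-distance
matching, because kept nodes of different groups are at distance at least `d`. Fractional bipartite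
matchings are dominated by integral ones (Birkhoff), so no loss occurs beyond discarding edges, and
each edge is kept by `d` of the `2d - 1` shifts. Averaging over the shifts gives the factor
`(2d - 1) / d = 2 - 1 / d`, which is at most `2 - 1 / (2d - 1)`.
-/

section Birkhoff

open Matrix

theorem exists_perm_sum_mul_le_of_mem_doublyStochastic {R V ι : Type*} [Field R] [LinearOrder R]
    [IsStrictOrderedRing R] [Fintype V] [DecidableEq V] {D : Matrix V V R}
    (hD : D ∈ doublyStochastic R V) (F : Finset ι) (w : ι → R) (i j : ι → V) :
    ∃ σ : Equiv.Perm V, ∑ e ∈ F, w e * D (i e) (j e) ≤ ∑ e ∈ F with σ (i e) = j e, w e := by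
  let value : Matrix V V R →ₗ[R] R := ∑ e ∈ F, w e • entryLinearMap R R (i e) (j e)
  have value_apply (A : Matrix V V R) : value A = ∑ e ∈ F, w e * A (i e) (j e) := by
    simp [value]
  rw [← SetLike.mem_coe, doublyStochastic_eq_convexHull_permMatrix] at hD
  obtain ⟨_, ⟨σ, rfl⟩, hσ⟩ :=
    (value.convexOn convex_univ).exists_ge_of_mem_convexHull (Set.subset_univ _) hD
  refine ⟨σ, ?_⟩
  simpa [value_apply, sum_filter, Equiv.Perm.permMatrix, PEquiv.toMatrix_apply] using hσ

variable {R A B : Type*} [Fintype A] [Fintype B] [DecidableEq A] [DecidableEq B]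

/-- The standard completion of a doubly substochastic (possibly rectangular) matrix to a doubly
stochastic one: the row and column deficits of `Y` are put on the diagonal. -/
def doublyStochasticDilation [Ring R] (Y : Matrix A B R) : Matrix (A ⊕ B) (A ⊕ B) R :=
  fromBlocks (diagonal fun a ↦ 1 - ∑ b, Y a b) Y Yᵀ (diagonal fun b ↦ 1 - ∑ a, Y a b)

theorem doublyStochasticDilation_mem_doublyStochastic [Ring R] [PartialOrder R] [IsOrderedRing R]
    {Y : Matrix A B R} (hY : ∀ a b, 0 ≤ Y a b) (hrow : ∀ a, ∑ b, Y a b ≤ 1)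
    (hcol : ∀ b, ∑ a, Y a b ≤ 1) :
    doublyStochasticDilation Y ∈ doublyStochastic R (A ⊕ B) := by
  rw [mem_doublyStochastic_iff_sum]
  refine ⟨?_, ?_, ?_⟩
  · rintro (a | b) (a' | b')
    · by_cases h : a = a' <;> simp [doublyStochasticDilation, h, hrow]
    · exact hY a b'
    · exact hY a' b
    · by_cases h : b = b' <;> simp [doublyStochasticDilation, h, hcol]
  · rintro (a | b) <;> simp [doublyStochasticDilation, diagonal_apply]
  · rintro (a | b) <;> simp [doublyStochasticDilation, diagonal_apply]

end Birkhoff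

section FractionalMatching

variable {R ι A B : Type*} [DecidableEq A] [DecidableEq B]

/-- `y` is a fractional matching of the bipartite graph with edge set `F` in which the edge `e`
joins the left node `p e` to the right node `q e`. -/
structure IsFractionalMatching [Semiring R] [PartialOrder R] (p : ι → A) (q : ι → B)
    (F : Finset ι) (y : ι → R) : Prop where
  nonneg : ∀ e ∈ F, 0 ≤ y e
  sum_left_le_one : ∀ a, ∑ e ∈ F with p e = a, y e ≤ 1
  sum_right_le_one : ∀ b, ∑ e ∈ F with q e = b, y e ≤ 1

/-- The bipartite adjacency matrix of the edges in `F`, weighted by `y`. Its rows and columns are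
the non-isolated nodes only, so that they are finite in number. -/
def weightedBiadjMatrix [AddCommMonoid R] (p : ι → A) (q : ι → B) (F : Finset ι) (y : ι → R) :
    Matrix (F.image p) (F.image q) R :=
  .of fun a b ↦ ∑ e ∈ F with p e = a ∧ q e = b, y e

variable {p : ι → A} {q : ι → B} {F : Finset ι} {y : ι → R}

theorem sum_weightedBiadjMatrix_row [AddCommMonoid R] (a : F.image p) :
    ∑ b, weightedBiadjMatrix p q F y a b = ∑ e ∈ F with p e = a, y e := by
  have maps_to : ∀ e ∈ {e ∈ F | p e = a}, q e ∈ F.image q :=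
    fun e he ↦ mem_image_of_mem q (mem_filter.1 he).1
  simp only [← sum_fiberwise_of_maps_to maps_to y, filter_filter]
  exact sum_coe_sort (F.image q) fun b ↦ ∑ e ∈ F with p e = a ∧ q e = b, y e

theorem sum_weightedBiadjMatrix_col [AddCommMonoid R] (b : F.image q) :
    ∑ a, weightedBiadjMatrix p q F y a b = ∑ e ∈ F with q e = b, y e := by
  have maps_to : ∀ e ∈ {e ∈ F | q e = b}, p e ∈ F.image p :=
    fun e he ↦ mem_image_of_mem p (mem_filter.1 he).1
  simp only [← sum_fiberwise_of_maps_to maps_to y, filter_filter, and_comm (a := q _ = _)]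
  exact sum_coe_sort (F.image p) fun a ↦ ∑ e ∈ F with p e = a ∧ q e = b, y e

theorem weightedBiadjMatrix_apply_of_injOn [AddCommMonoid R]
    (hpq : Set.InjOn (fun e ↦ (p e, q e)) F) (e : F) :
    weightedBiadjMatrix p q F y ⟨p e, mem_image_of_mem p e.2⟩ ⟨q e, mem_image_of_mem q e.2⟩ =
      y e := by
  have parallel_eq : {f ∈ F | p f = p e ∧ q f = q e} = {e.1} := by
    ext f
    simp only [mem_filter, mem_singleton]
    refine ⟨fun ⟨hf, hp, hq⟩ ↦ hpq hf e.2 (Prod.ext hp hq), ?_⟩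
    rintro rfl
    exact ⟨e.2, rfl, rfl⟩
  simp [weightedBiadjMatrix, parallel_eq]

theorem IsFractionalMatching.dilation_mem_doublyStochastic [Ring R] [PartialOrder R]
    [IsOrderedRing R] (hy : IsFractionalMatching p q F y) :
    doublyStochasticDilation (weightedBiadjMatrix p q F y) ∈
      doublyStochastic R (F.image p ⊕ F.image q) := by
  refine doublyStochasticDilation_mem_doublyStochastic (fun a b ↦ ?_) (fun a ↦ ?_) (fun b ↦ ?_)
  · exact sum_nonneg fun e he ↦ hy.nonneg e (mem_filter.1 he).1
  · exact (sum_weightedBiadjMatrix_row a).trans_le (hy.sum_left_le_one a)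
  · exact (sum_weightedBiadjMatrix_col b).trans_le (hy.sum_right_le_one b)

theorem IsFractionalMatching.exists_matching_le [Field R] [LinearOrder R] [IsStrictOrderedRing R]
    (hy : IsFractionalMatching p q F y) (hpq : Set.InjOn (fun e ↦ (p e, q e)) F) (w : ι → R) :
    ∃ M ⊆ F, Set.InjOn p M ∧ Set.InjOn q M ∧ ∑ e ∈ F, w e * y e ≤ ∑ e ∈ M, w e := by
  let left (e : F) : F.image p := ⟨p e, mem_image_of_mem p e.2⟩
  let right (e : F) : F.image q := ⟨q e, mem_image_of_mem q e.2⟩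
  obtain ⟨σ, hσ⟩ := exists_perm_sum_mul_le_of_mem_doublyStochastic
    hy.dilation_mem_doublyStochastic univ (fun e : F ↦ w e) (Sum.inl ∘ left) (Sum.inr ∘ right)
  let M : Finset F := {e | σ (.inl (left e)) = .inr (right e)}
  have mem_M {e : F} (he : e ∈ M) : σ (.inl (left e)) = .inr (right e) := (mem_filter.1 he).2
  have left_eq_iff {e f : F} (he : e ∈ M) (hf : f ∈ M) : left e = left f ↔ right e = right f := by
    rw [← Sum.inr_injective.eq_iff (a := right e), ← mem_M he, ← mem_M hf, σ.injective.eq_iff,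
      Sum.inl_injective.eq_iff]
  have edge_eq {e f : F} (hl : left e = left f) (hr : right e = right f) : e = f :=
    Subtype.ext <| hpq e.2 f.2 <| Prod.ext (congrArg Subtype.val hl) (congrArg Subtype.val hr)
  refine ⟨M.map (.subtype _), map_subtype_subset M, ?_, ?_, ?_⟩
  · rw [coe_map]
    rintro _ ⟨e, he, rfl⟩ _ ⟨f, hf, rfl⟩ h
    have hl : left e = left f := Subtype.ext h
    exact congrArg Subtype.val (edge_eq hl ((left_eq_iff he hf).1 hl))
  · rw [coe_map]
    rintro _ ⟨e, he, rfl⟩ _ ⟨f, hf, rfl⟩ h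
    have hr : right e = right f := Subtype.ext h
    exact congrArg Subtype.val (edge_eq ((left_eq_iff he hf).2 hr) hr)
  · calc ∑ e ∈ F, w e * y e
        = ∑ e : F, w e * doublyStochasticDilation (weightedBiadjMatrix p q F y)
            (.inl (left e)) (.inr (right e)) := by
          rw [← sum_coe_sort F]
          exact sum_congr rfl fun e _ ↦
            congrArg (w e * ·) (weightedBiadjMatrix_apply_of_injOn hpq e).symm
      _ ≤ ∑ e ∈ M, w e := hσ
      _ = ∑ e ∈ M.map (.subtype _), w e := by rw [sum_map]; rfl

end FractionalMatching

section Periodic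

theorem card_filter_range_add_mod_lt {d m : ℕ} (hdm : d ≤ m) (a : ℕ) :
    #{k ∈ range m | (a + k) % m < d} = d := by
  have periodic : Function.Periodic (fun k ↦ k % m < d) m := fun k ↦ by simp
  calc #{k ∈ range m | (a + k) % m < d}
      = #{k ∈ Ico a (a + m) | k % m < d} := by
        have shift_range : Ico a (a + m) = (range m).map (addLeftEmbedding a) := by
          rw [range_eq_Ico, map_add_left_Ico, add_zero]
        rw [shift_range, filter_map, card_map]
        rfl
    _ = #{k ∈ range m | k % m < d} := by
        rw [Nat.filter_Ico_card_eq_of_periodic _ _ _ periodic, Nat.count_eq_card_filter_range]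
    _ = #(range d) := by
        congr 1
        ext k
        grind [Nat.mod_eq_of_lt]
    _ = d := card_range d

theorem exists_shift_mul_sum_le {R ι : Type*} [Semiring R] [LinearOrder R] [IsStrictOrderedRing R]
    {d m : ℕ} (hm : 0 < m) (hdm : d ≤ m) (E : Finset ι) (pos : ι → ℕ) (f : ι → R) :
    ∃ k, d * ∑ e ∈ E, f e ≤ m * ∑ e ∈ E with (pos e + k) % m < d, f e := by
  have sum_shifts : ∑ k ∈ range m, ∑ e ∈ E with (pos e + k) % m < d, f e = d * ∑ e ∈ E, f e := by
    simp only [sum_filter]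
    rw [sum_comm, mul_sum]
    refine sum_congr rfl fun e _ ↦ ?_
    rw [← sum_filter, sum_const, card_filter_range_add_mod_lt hdm, nsmul_eq_mul]
  obtain ⟨k, -, hk⟩ := exists_le_of_sum_le (s := range m) (nonempty_range_iff.2 hm.ne')
    (f := fun _ ↦ d * ∑ e ∈ E, f e)
    (g := fun k ↦ m * ∑ e ∈ E with (pos e + k) % m < d, f e)
    (by rw [sum_const, card_range, nsmul_eq_mul, ← mul_sum, sum_shifts])
  exact ⟨k, hk⟩

theorem lt_add_of_div_eq_of_mod_lt {d m u v : ℕ} (hv : v % m < d) (h : u / m = v / m) :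
    v < u + d := by
  have hu' := Nat.div_add_mod u m
  have hv' := Nat.div_add_mod v m
  rw [h] at hu'
  omega

theorem add_le_of_div_lt_of_mod_lt {d m u v : ℕ} (hm : 2 * d ≤ m + 1) (hu : u % m < d)
    (h : u / m < v / m) : u + d ≤ v := by
  have hu' := Nat.div_add_mod u m
  have hv' := Nat.div_add_mod v m
  have next_block : m * (u / m) + m ≤ m * (v / m) := Nat.mul_le_mul_left m h
  omega

end Periodic

section Windows

variable {n : ℕ} {T : Type*} {d m k : ℕ} {E M : Finset (Fin n × T)}

/-- The edges kept when `S`, shifted by `k`, is cut into groups of `m` consecutive nodes and only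
the first `d` nodes of each group are retained. -/
def windowEdges (d m k : ℕ) (E : Finset (Fin n × T)) : Finset (Fin n × T) :=
  {e ∈ E | (e.1.val + k) % m < d}

/-- The right end of an edge once every `t ∈ T` is split into one copy `(j, t)` for each group `j`
of `m` consecutive nodes of `S`, shifted by `k`. -/
def splitNode (m k : ℕ) (e : Fin n × T) : ℕ × T :=
  ((e.1.val + k) / m, e.2)

theorem windowEdges_subset : windowEdges d m k E ⊆ E :=
  filter_subset _ _

theorem mod_lt_of_mem_windowEdges {e : Fin n × T} (he : e ∈ windowEdges d m k E) :
    (e.1.val + k) % m < d :=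
  (mem_filter.1 he).2

variable [DecidableEq T]

theorem FeasLP1.sum_splitNode_le_one {x : Fin n × T → ℝ} (hx : FeasLP1 d E x) (b : ℕ × T) :
    ∑ e ∈ windowEdges d m k E with splitNode m k e = b, x e ≤ 1 := by
  obtain ⟨x_nonneg, -, -, sum_range_le⟩ := hx
  obtain h_empty | h_nonempty :=
    {e ∈ windowEdges d m k E | splitNode m k e = b}.eq_empty_or_nonempty
  · simp [h_empty]
  obtain ⟨first, h_first, first_le⟩ := exists_min_image _ (fun e ↦ e.1) h_nonempty
  refine le_trans (sum_le_sum_of_subset_of_nonneg (fun e he ↦ ?_) fun e _ _ ↦ x_nonneg e)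
    (sum_range_le first.1 b.2)
  have h_le : first.1 ≤ e.1 := first_le e he
  obtain ⟨he_mem, rfl⟩ := mem_filter.1 he
  have same_group : (first.1.val + k) / m = (e.1.val + k) / m :=
    congrArg Prod.fst (mem_filter.1 h_first).2
  have h_lt := lt_add_of_div_eq_of_mod_lt (mod_lt_of_mem_windowEdges he_mem) same_group
  exact mem_filter.2 ⟨windowEdges_subset he_mem, rfl, h_le, by omega⟩

theorem FeasLP1.isFractionalMatching {x : Fin n × T → ℝ} (hx : FeasLP1 d E x) (m k : ℕ) :
    IsFractionalMatching Prod.fst (splitNode m k) (windowEdges d m k E) x where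
  nonneg e _ := hx.1 e
  sum_left_le_one s :=
    (sum_le_sum_of_subset_of_nonneg (filter_subset_filter _ windowEdges_subset)
      fun e _ _ ↦ hx.1 e).trans (hx.2.2.1 s)
  sum_right_le_one := hx.sum_splitNode_le_one

theorem ddm_of_injOn_splitNode (hm : 2 * d ≤ m + 1) (hM : M ⊆ windowEdges d m k E)
    (h_fst : Set.InjOn Prod.fst (M : Set (Fin n × T)))
    (h_split : Set.InjOn (splitNode m k) (M : Set (Fin n × T))) :
    DDM d E M := by
  refine ⟨hM.trans windowEdges_subset, fun e he f hf h ↦ h_fst he hf h, ?_⟩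
  intro e he f hf h_snd h_ne
  have group_ne : (e.1.val + k) / m ≠ (f.1.val + k) / m :=
    fun h ↦ h_ne (h_split he hf (Prod.ext h h_snd))
  rw [Nat.dist]
  obtain h_lt | h_lt := group_ne.lt_or_gt
  · have := add_le_of_div_lt_of_mod_lt hm (mod_lt_of_mem_windowEdges (hM he)) h_lt
    omega
  · have := add_le_of_div_lt_of_mod_lt hm (mod_lt_of_mem_windowEdges (hM hf)) h_lt
    omega

theorem FeasLP1.exists_ddm_sum_windowEdges_le {x : Fin n × T → ℝ} (hx : FeasLP1 d E x)
    (hm : 2 * d ≤ m + 1) (k : ℕ) (w : Fin n × T → ℝ) :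
    ∃ M, DDM d E M ∧ ∑ e ∈ windowEdges d m k E, w e * x e ≤ ∑ e ∈ M, w e := by
  have split_simple : Set.InjOn (fun e ↦ (e.1, splitNode m k e))
      (windowEdges d m k E : Set (Fin n × T)) := fun e _ f _ h ↦
    Prod.ext (Prod.ext_iff.1 h).1 (congrArg (fun c ↦ c.2.2) h)
  obtain ⟨M, hM, h_fst, h_split, h_le⟩ :=
    (hx.isFractionalMatching m k).exists_matching_le split_simple w
  exact ⟨M, ddm_of_injOn_splitNode hm hM h_fst h_split, h_le⟩

end Windows

theorem stmt6_general {n : ℕ} {T : Type*} [DecidableEq T] {d : ℕ} (hd : 1 ≤ d)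
    {E : Finset (Fin n × T)} (w : Fin n × T → ℝ) {x : Fin n × T → ℝ} (hx : FeasLP1 d E x) :
    ∃ M, DDM d E M ∧ ∑ e ∈ E, w e * x e ≤ (2 - 1 / (d : ℝ)) * ∑ e ∈ M, w e := by
  obtain ⟨k, hk⟩ := exists_shift_mul_sum_le (m := 2 * d - 1) (d := d) (by omega) (by omega) E
    (fun e ↦ e.1.val) (fun e ↦ w e * x e)
  obtain ⟨M, hM, h_le⟩ := hx.exists_ddm_sum_windowEdges_le (m := 2 * d - 1) (by omega) k w
  refine ⟨M, hM, ?_⟩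
  have hd_pos : (0 : ℝ) < d := by exact_mod_cast hd
  have cast_period : ((2 * d - 1 : ℕ) : ℝ) = d * (2 - 1 / d) := by
    rw [Nat.cast_sub (by omega)]
    push_cast
    field_simp
  refine le_of_mul_le_mul_left ?_ hd_pos
  calc d * ∑ e ∈ E, w e * x e
      ≤ (2 * d - 1 : ℕ) * ∑ e ∈ windowEdges d (2 * d - 1) k E, w e * x e := hk
    _ ≤ (2 * d - 1 : ℕ) * ∑ e ∈ M, w e := by gcongr
    _ = d * ((2 - 1 / d) * ∑ e ∈ M, w e) := by rw [cast_period, mul_assoc]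

/-- The integrality gap of LP1 is at most `2 − 1/(2d−1)`: every feasible solution of LP1
has objective value at most `(2 − 1/(2d−1))` times the weight of some `d`-distance
matching. -/
theorem stmt6 {n : ℕ} {T : Type*} [DecidableEq T]
    (d : ℕ) (hd : 1 ≤ d) (E : Finset (Fin n × T))
    (w : Fin n × T → ℝ) (hw : ∀ e ∈ E, 0 ≤ w e)
    (x : Fin n × T → ℝ) (hx : FeasLP1 d E x) :
    ∃ M, DDM d E M ∧
      ∑ e ∈ E, w e * x e ≤ (2 - 1 / (2 * (d : ℝ) - 1)) * ∑ e ∈ M, w e := by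
  obtain ⟨M, hM, h_le⟩ := stmt6_general hd w hx
  have hd_real : (1 : ℝ) ≤ d := by exact_mod_cast hd
  have weight_nonneg : 0 ≤ ∑ e ∈ M, w e := sum_nonneg fun e he ↦ hw e (hM.1 he)
  exact ⟨M, hM, h_le.trans (by gcongr; linarith)⟩
end

section
/- If d = 1 or d = 2, then LP1 and LP2 are integral: for every weight function w : E → ℝ, LP1 attains its optimum at an integral vector, so its optimum equals the maximum weight of a d-distance matching; and, whenever LP2 is feasible, LP2 attains its optimum at an integral vector, so its optimum equals the maximum weight of a perfect d-distance matching. -/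
open Finset

/-- `x` is a feasible solution of LP2 (LP1 with the degree constraints on `S` tightened
to equalities). -/
def FeasLP2 {n : ℕ} {T : Type*} [DecidableEq T]
    (d : ℕ) (E : Finset (Fin n × T)) (x : Fin n × T → ℝ) : Prop :=
  (∀ e, 0 ≤ x e) ∧ (∀ e ∉ E, x e = 0) ∧
  (∀ s : Fin n, ∑ e ∈ E.filter (fun e => e.1 = s), x e = 1) ∧
  (∀ s : Fin n, ∀ t : T,
    ∑ e ∈ E.filter (fun e => e.2 = t ∧ s.val ≤ e.1.val ∧ e.1.val < s.val + d), x e ≤ 1)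

/-!
Read the rows of a feasible `x` as probability distributions on `T` together with an extra state
`none` that takes up the slack of the degree constraint. For `d = 2` the window constraints say that
the masses of `t` in two consecutive rows add up to at most `1`, which is exactly what is needed to
couple the two rows in such a way that `t` is never repeated. Chaining the couplings yields a Markov
chain whose realizations are `d`-distance matchings (perfect ones if there is no slack) and whose
expected weight is the LP value of `x`, so some realization has at least that weight. For `d ≤ 1`
consecutive rows do not interact and any coupling will do.
-/

section RerouteDiag

variable {K A : Type*} [Field K] [Fintype A] [DecidableEq A]

/-- The total mass of the matrix `q` outside row `a` and column `a`. -/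
def massOutside (a : A) (q : A → A → K) : K :=
  ∑ i ∈ univ.erase a, ∑ j ∈ univ.erase a, q i j

/-- The matrix obtained from `q` by moving the entry at `(a, a)` off the diagonal so that row and
column sums are kept: the fraction `q a a / massOutside a q` of each entry outside row `a` and
column `a` is removed, and put back once into row `a` (in the same column) and once into column `a`
(in the same row). If `massOutside a q = 0`, the fraction is `0` by convention; this does no harm
where `q a a ≤ massOutside a q`. -/
def rerouteDiag (a : A) (q : A → A → K) (i j : A) : K :=
  let fraction := q a a / massOutside a q
  if i = a then
    if j = a then 0 else q a j + fraction * ∑ k ∈ univ.erase a, q k j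
  else
    if j = a then q i a + fraction * ∑ k ∈ univ.erase a, q i k else (1 - fraction) * q i j

variable (a : A) (q : A → A → K)

theorem massOutside_swap : massOutside a (fun i j => q j i) = massOutside a q :=
  sum_comm

theorem rerouteDiag_swap : rerouteDiag a (fun i j => q j i) = fun i j => rerouteDiag a q j i := by
  funext i j
  simp only [rerouteDiag, massOutside_swap]
  split_ifs <;> rfl

theorem rerouteDiag_self : rerouteDiag a q a a = 0 := by
  simp [rerouteDiag]

variable {a q}

theorem rerouteDiag_diag_eq_zero {i : A} (hi : q i i = 0) : rerouteDiag a q i i = 0 := by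
  by_cases h : i = a
  · rw [h, rerouteDiag_self]
  · simp [rerouteDiag, h, hi]

theorem sum_rerouteDiag_same (h : massOutside a q = 0 → q a a = 0) :
    ∑ j, rerouteDiag a q a j = ∑ j, q a j := by
  calc ∑ j, rerouteDiag a q a j
      = ∑ j ∈ univ.erase a,
          (q a j + q a a / massOutside a q * ∑ i ∈ univ.erase a, q i j) := by
        rw [← add_sum_erase univ _ (mem_univ a), rerouteDiag_self, zero_add]
        exact sum_congr rfl fun j hj => by simp [rerouteDiag, ne_of_mem_erase hj]
    _ = ∑ j ∈ univ.erase a, q a j + q a a / massOutside a q * massOutside a q := by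
        rw [sum_add_distrib, ← mul_sum, sum_comm, massOutside]
    _ = ∑ j, q a j := by rw [div_mul_cancel_of_imp h, sum_erase_add _ _ (mem_univ a)]

theorem sum_rerouteDiag_of_ne {i : A} (hi : i ≠ a) :
    ∑ j, rerouteDiag a q i j = ∑ j, q i j := by
  have sum_erase : ∑ j ∈ univ.erase a, rerouteDiag a q i j =
      (1 - q a a / massOutside a q) * ∑ j ∈ univ.erase a, q i j := by
    rw [mul_sum]
    exact sum_congr rfl fun j hj => by simp [rerouteDiag, hi, ne_of_mem_erase hj]
  rw [← add_sum_erase univ _ (mem_univ a), ← add_sum_erase univ (q i) (mem_univ a), sum_erase]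
  simp only [rerouteDiag, if_neg hi, if_true]
  ring

theorem sum_rerouteDiag (h : massOutside a q = 0 → q a a = 0) (i : A) :
    ∑ j, rerouteDiag a q i j = ∑ j, q i j := by
  rcases eq_or_ne i a with rfl | hi
  · exact sum_rerouteDiag_same h
  · exact sum_rerouteDiag_of_ne hi

theorem rerouteDiag_nonneg [LinearOrder K] [IsStrictOrderedRing K] (hq : ∀ i j, 0 ≤ q i j)
    (h : q a a ≤ massOutside a q) (i j : A) : 0 ≤ rerouteDiag a q i j := by
  have outside_nonneg : 0 ≤ massOutside a q :=
    sum_nonneg fun i _ => sum_nonneg fun j _ => hq i j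
  have fraction_nonneg : 0 ≤ q a a / massOutside a q := div_nonneg (hq a a) outside_nonneg
  have fraction_le_one : q a a / massOutside a q ≤ 1 := div_le_one_of_le₀ h outside_nonneg
  unfold rerouteDiag
  split_ifs
  · exact le_rfl
  · exact add_nonneg (hq a j) (mul_nonneg fraction_nonneg (sum_nonneg fun k _ => hq k j))
  · exact add_nonneg (hq i a) (mul_nonneg fraction_nonneg (sum_nonneg fun k _ => hq i k))
  · exact mul_nonneg (sub_nonneg.2 fraction_le_one) (hq i j)

end RerouteDiag

section Coupling

variable {K A B : Type*} [Field K] [LinearOrder K] [Fintype A] [Fintype B]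

/-- `q` is a coupling of the distributions `p` and `r`: a nonnegative matrix with row sums `p`
and column sums `r`. -/
structure IsCoupling (p : A → K) (r : B → K) (q : A → B → K) : Prop where
  nonneg : ∀ a b, 0 ≤ q a b
  sum_row : ∀ a, ∑ b, q a b = p a
  sum_col : ∀ b, ∑ a, q a b = r b

namespace IsCoupling

variable {p : A → K} {r : B → K} {q : A → B → K}

theorem swap (hq : IsCoupling p r q) : IsCoupling r p (fun b a => q a b) :=
  ⟨fun b a => hq.nonneg a b, hq.sum_col, hq.sum_row⟩

theorem sum_eq_sum (hq : IsCoupling p r q) : ∑ a, p a = ∑ b, r b := by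
  simp_rw [← hq.sum_row, ← hq.sum_col]
  exact sum_comm

variable [IsStrictOrderedRing K]

theorem prod (hp : p ∈ stdSimplex K A) (hr : r ∈ stdSimplex K B) :
    IsCoupling p r (fun a b => p a * r b) where
  nonneg a b := mul_nonneg (hp.1 a) (hr.1 b)
  sum_row a := by rw [← mul_sum, hr.2, mul_one]
  sum_col b := by rw [← sum_mul, hp.2, one_mul]

theorem col_mem_stdSimplex (hq : IsCoupling p r q) (hp : p ∈ stdSimplex K A) :
    r ∈ stdSimplex K B :=
  ⟨fun b => hq.sum_col b ▸ sum_nonneg fun a _ => hq.nonneg a b, hq.sum_eq_sum ▸ hp.2⟩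

theorem le_row (hq : IsCoupling p r q) (a : A) (b : B) : q a b ≤ p a :=
  hq.sum_row a ▸ single_le_sum (fun b _ => hq.nonneg a b) (mem_univ b)

theorem eq_zero_of_col_eq_zero (hq : IsCoupling p r q) {b : B} (hb : r b = 0) (a : A) :
    q a b = 0 :=
  le_antisymm (hb ▸ hq.swap.le_row b a) (hq.nonneg a b)

theorem total_expectation (hq : IsCoupling p r q) (g : A → K) :
    r ⬝ᵥ (fun b => univ.centerMass (fun a => q a b) g) = p ⬝ᵥ g := by
  have mul_centerMass (b : B) :
      r b * univ.centerMass (fun a => q a b) g = ∑ a, q a b * g a := by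
    by_cases hb : r b = 0
    · simp [hb, hq.eq_zero_of_col_eq_zero hb]
    · rw [centerMass, hq.sum_col, smul_eq_mul, mul_inv_cancel_left₀ hb]
      rfl
  calc ∑ b, r b * univ.centerMass (fun a => q a b) g
      = ∑ b, ∑ a, q a b * g a := sum_congr rfl fun b _ => mul_centerMass b
    _ = ∑ a, ∑ b, q a b * g a := sum_comm
    _ = ∑ a, p a * g a := sum_congr rfl fun a _ => by rw [← sum_mul, hq.sum_row]

end IsCoupling

variable {p r : A → K} {q : A → A → K}

theorem IsCoupling.massOutside_add [DecidableEq A] (hq : IsCoupling p r q) (a : A) :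
    massOutside a q + (p a + r a) = ∑ i, p i + q a a := by
  have massOutside_eq : massOutside a q =
      ∑ i ∈ univ.erase a, p i - ∑ i ∈ univ.erase a, q i a := by
    rw [massOutside, ← sum_sub_distrib]
    refine sum_congr rfl fun i _ => ?_
    rw [← hq.sum_row, ← add_sum_erase univ (q i) (mem_univ a), add_sub_cancel_left]
  rw [massOutside_eq, ← hq.sum_col, ← add_sum_erase univ p (mem_univ a),
    ← add_sum_erase univ (fun i => q i a) (mem_univ a)]
  ring

variable [IsStrictOrderedRing K]

theorem IsCoupling.rerouteDiag [DecidableEq A] (hq : IsCoupling p r q) {a : A}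
    (ha : p a + r a ≤ ∑ i, p i) : IsCoupling p r (rerouteDiag a q) := by
  have diag_le : q a a ≤ massOutside a q := by linarith [hq.massOutside_add a]
  have diag_eq_zero (h : massOutside a q = 0) : q a a = 0 :=
    le_antisymm (h ▸ diag_le) (hq.nonneg a a)
  refine ⟨rerouteDiag_nonneg hq.nonneg diag_le, fun i => ?_, fun j => ?_⟩
  · rw [sum_rerouteDiag diag_eq_zero, hq.sum_row]
  · have sum_swap := sum_rerouteDiag (q := fun i j => q j i) (massOutside_swap a q ▸ diag_eq_zero) j
    rwa [rerouteDiag_swap, hq.sum_col] at sum_swap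

theorem exists_isCoupling_diag_eq_zero (hp : p ∈ stdSimplex K A) (hr : r ∈ stdSimplex K A)
    (D : Finset A) (hD : ∀ a ∈ D, p a + r a ≤ 1) :
    ∃ q, IsCoupling p r q ∧ ∀ a ∈ D, q a a = 0 := by
  classical
  induction D using Finset.induction_on with
  | empty => exact ⟨_, .prod hp hr, by simp⟩
  | insert a D _ ih =>
    rw [forall_mem_insert] at hD
    obtain ⟨q, hq, hqD⟩ := ih hD.2
    exact ⟨rerouteDiag a q, hq.rerouteDiag (hp.2 ▸ hD.1), (forall_mem_insert ..).2
      ⟨rerouteDiag_self a q, fun b hb => rerouteDiag_diag_eq_zero (hqD b hb)⟩⟩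

end Coupling

section Trajectory

variable {K A : Type*} [Field K] [LinearOrder K] [IsStrictOrderedRing K] [Fintype A]

theorem exists_pos_centerMass_le {p : A → K} (hp : ∀ a, 0 ≤ p a) (hpos : 0 < ∑ a, p a)
    (g : A → K) : ∃ a, 0 < p a ∧ univ.centerMass p g ≤ g a := by
  have support_pos : 0 < ∑ a with p a ≠ 0, p a := by rwa [sum_filter_ne_zero]
  obtain ⟨a, ha, hle⟩ := (convexOn_id (𝕜 := K) convex_univ).exists_ge_of_centerMass
    (fun a _ => hp a) support_pos (fun a _ => Set.mem_univ (g a))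
  rw [centerMass_filter_ne_zero] at hle
  exact ⟨a, (hp a).lt_of_ne' (mem_filter.1 ha).2, hle⟩

theorem exists_trajectory_of_isCoupling {N : ℕ} {p : Fin (N + 1) → A → K}
    {q : Fin N → A → A → K} (hp : p 0 ∈ stdSimplex K A)
    (hq : ∀ i, IsCoupling (p i.castSucc) (p i.succ) (q i)) (h : Fin (N + 1) → A → K) :
    ∃ s : Fin (N + 1) → A, (∀ i, 0 < p i (s i)) ∧
      (∀ i, 0 < q i (s i.castSucc) (s i.succ)) ∧ ∑ i, p i ⬝ᵥ h i ≤ ∑ i, h i (s i) := by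
  induction N with
  | zero =>
    obtain ⟨a, ha, hle⟩ := exists_pos_centerMass_le hp.1 (hp.2 ▸ one_pos) (h 0)
    rw [centerMass_eq_of_sum_1 _ _ hp.2] at hle
    exact ⟨fun _ => a, by simpa [Fin.forall_fin_one], by simp, by simpa [dotProduct] using hle⟩
  | succ N ih =>
    -- The first reward is passed on to the second state as its conditional mean.
    let condMean (b : A) : K := univ.centerMass (fun a => q 0 a b) (h 0)
    have expectation_condMean : p 1 ⬝ᵥ condMean = p 0 ⬝ᵥ h 0 := (hq 0).total_expectation (h 0)
    obtain ⟨s, hs, hqs, hle⟩ := ih (p := fun i => p i.succ) (q := fun i => q i.succ)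
      ((hq 0).col_mem_stdSimplex hp) (fun i => hq i.succ)
      (Fin.cons (h 1 + condMean) fun i => h i.succ.succ)
    obtain ⟨a, ha, hmean⟩ : ∃ a, 0 < q 0 a (s 0) ∧ condMean (s 0) ≤ h 0 a :=
      exists_pos_centerMass_le (fun a => (hq 0).nonneg a (s 0))
        ((hq 0).sum_col (s 0) ▸ hs 0) (h 0)
    refine ⟨Fin.cons a s, Fin.cases (ha.trans_le ((hq 0).le_row a (s 0))) hs,
      Fin.cases ha hqs, ?_⟩
    simp only [Fin.sum_univ_succ (n := N), Fin.sum_univ_succ (n := N + 1), Fin.cons_zero,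
      Fin.cons_succ, Fin.succ_zero_eq_one, dotProduct_add, Pi.add_apply,
      expectation_condMean] at hle ⊢
    linarith

theorem exists_trajectory_not_repeating {n : ℕ} {p : Fin n → A → K}
    (hp : ∀ i, p i ∈ stdSimplex K A) (D : Finset A)
    (hD : ∀ i j : Fin n, i.val + 1 = j.val → ∀ a ∈ D, p i a + p j a ≤ 1) (h : Fin n → A → K) :
    ∃ s : Fin n → A, (∀ i, 0 < p i (s i)) ∧
      (∀ i j : Fin n, i.val + 1 = j.val → s i ∈ D → s i ≠ s j) ∧
      ∑ i, p i ⬝ᵥ h i ≤ ∑ i, h i (s i) := by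
  classical
  cases n with
  | zero => exact ⟨Fin.elim0, by simp⟩
  | succ N =>
    choose q hq hqD using fun i : Fin N =>
      exists_isCoupling_diag_eq_zero (hp i.castSucc) (hp i.succ) D (hD _ _ (by simp))
    obtain ⟨s, hs, hqs, hle⟩ := exists_trajectory_of_isCoupling (hp 0) hq h
    refine ⟨s, hs, fun i j hij hi heq => ?_, hle⟩
    obtain ⟨k, rfl⟩ := Fin.exists_succ_eq.2 (show j ≠ 0 by rintro rfl; simp at hij)
    obtain rfl : i = k.castSucc := Fin.ext (by simpa using hij)
    exact (hqs k).ne' (heq ▸ hqD k _ hi)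

end Trajectory

section Slack

variable {K B : Type*} [Ring K] [Fintype B]

/-- The extension of a vector `y` by a slack coordinate `none` that makes the coordinates sum
to `1`. -/
def withSlack (y : B → K) (a : Option B) : K :=
  a.elim (1 - ∑ b, y b) y

theorem withSlack_dotProduct (y g : B → K) :
    (withSlack y ⬝ᵥ fun a => a.elim 0 g) = y ⬝ᵥ g := by
  simp [dotProduct, Fintype.sum_option, withSlack]

theorem withSlack_mem_stdSimplex [PartialOrder K] [IsOrderedRing K] {y : B → K}
    (hy : ∀ b, 0 ≤ y b) (hy1 : ∑ b, y b ≤ 1) : withSlack y ∈ stdSimplex K (Option B) := by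
  refine ⟨?_, by simp [Fintype.sum_option, withSlack]⟩
  rintro (_ | b)
  · exact sub_nonneg.2 hy1
  · exact hy b

end Slack

section EdgeSums

variable {α T K : Type*} [DecidableEq T] [AddCommMonoid K]
  {E : Finset (α × T)} {f : α × T → K}

theorem sum_filter_fst_eq [DecidableEq α] (hf : ∀ e ∉ E, f e = 0) (i : α) :
    ∑ e ∈ E with e.1 = i, f e = ∑ t : E.image Prod.snd, f (i, t) := by
  calc ∑ e ∈ E with e.1 = i, f e
      = ∑ e ∈ {i} ×ˢ E.image Prod.snd, f e := by
        refine sum_subset (fun e he => ?_) fun e he heE => hf e fun h => heE ?_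
        · rw [mem_filter] at he
          exact mem_product.2 ⟨mem_singleton.2 he.2, mem_image_of_mem _ he.1⟩
        · exact mem_filter.2 ⟨h, mem_singleton.1 (mem_product.1 he).1⟩
    _ = ∑ t ∈ E.image Prod.snd, f (i, t) := by rw [sum_product, sum_singleton]
    _ = ∑ t : E.image Prod.snd, f (i, t) := (sum_coe_sort _ _).symm

theorem sum_eq_sum_sum_image_snd [Fintype α] (hf : ∀ e ∉ E, f e = 0) :
    ∑ e ∈ E, f e = ∑ i, ∑ t : E.image Prod.snd, f (i, t) := by
  classical
  rw [← sum_fiberwise E Prod.fst f]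
  exact sum_congr rfl fun i _ => sum_filter_fst_eq hf i

end EdgeSums

section PartialMaps

variable {n d : ℕ} {T : Type*} [DecidableEq T] {E : Finset (Fin n × T)} {σ : Fin n → Option T}

/-- The edges of `E` selected by the partial map `σ`, which assigns to a node of `S` its partner or,
with value `none`, leaves it uncovered. -/
def selectedEdges (E : Finset (Fin n × T)) (σ : Fin n → Option T) : Finset (Fin n × T) :=
  E.filter fun e => σ e.1 = some e.2

theorem mem_selectedEdges {e : Fin n × T} : e ∈ selectedEdges E σ ↔ e ∈ E ∧ σ e.1 = some e.2 :=
  mem_filter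

theorem ddm_selectedEdges (hd : d ≤ 2)
    (hσ : d = 2 → ∀ i j : Fin n, i.val + 1 = j.val → σ i ≠ none → σ i ≠ σ j) :
    DDM d E (selectedEdges E σ) := by
  refine ⟨filter_subset _ _, fun e he f hf hef => ?_, fun e he f hf hef hne => ?_⟩ <;>
    rw [mem_selectedEdges] at he hf
  · exact Prod.ext hef (Option.some.inj (he.2.symm.trans (hef ▸ hf.2)))
  · have fst_ne : e.1.val ≠ f.1.val := fun h => hne (Prod.ext (Fin.ext h) hef)
    have same_image : σ e.1 = σ f.1 := by rw [he.2, hf.2, hef]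
    by_contra! hlt
    have adjacent : d = 2 ∧ (e.1.val + 1 = f.1.val ∨ f.1.val + 1 = e.1.val) := by
      simp only [Nat.dist] at hlt
      omega
    rcases adjacent with ⟨hd2, h | h⟩
    · exact hσ hd2 _ _ h (by simp [he.2]) same_image
    · exact hσ hd2 _ _ h (by simp [hf.2]) same_image.symm

theorem sum_selectedEdges {K : Type*} [AddCommMonoid K] (hσ : ∀ i, ∀ t ∈ σ i, (i, t) ∈ E)
    (w : Fin n × T → K) :
    ∑ e ∈ selectedEdges E σ, w e = ∑ i, (σ i).elim 0 fun t => w (i, t) := by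
  rw [← sum_fiberwise (selectedEdges E σ) Prod.fst w]
  refine sum_congr rfl fun i _ => ?_
  cases hi : σ i with
  | none =>
    refine sum_eq_zero fun e he => ?_
    simp only [mem_filter, mem_selectedEdges] at he
    simp [← he.2, he.1.2] at hi
  | some t =>
    have fiber : {e ∈ selectedEdges E σ | e.1 = i} = {(i, t)} := by
      ext ⟨j, u⟩
      simp only [mem_filter, mem_selectedEdges, mem_singleton, Prod.mk.injEq]
      constructor
      · rintro ⟨⟨-, hu⟩, rfl⟩
        exact ⟨rfl, Option.some.inj (hu.symm.trans hi)⟩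
      · rintro ⟨rfl, rfl⟩
        exact ⟨⟨hσ _ _ hi, hi⟩, rfl⟩
    rw [fiber, sum_singleton, Option.elim_some]

end PartialMaps

section Rounding

variable {n d : ℕ} {T : Type*} [DecidableEq T] {E : Finset (Fin n × T)} {x : Fin n × T → ℝ}

theorem FeasLP2.feasLP1 (hx : FeasLP2 d E x) : FeasLP1 d E x :=
  ⟨hx.1, hx.2.1, fun s => (hx.2.2.1 s).le, hx.2.2.2⟩

namespace FeasLP1

theorem add_le_one_of_adjacent (hx : FeasLP1 d E x) (hd : 2 ≤ d) {i j : Fin n}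
    (hij : i.val + 1 = j.val) (t : T) : x (i, t) + x (j, t) ≤ 1 := by
  obtain ⟨nonneg, eq_zero, -, window⟩ := hx
  have hne : (i, t) ≠ (j, t) := by
    intro h
    simp [← (Prod.mk.inj h).1] at hij
  calc x (i, t) + x (j, t)
      = ∑ e ∈ {(i, t), (j, t)} with e ∈ E, x e := by
        rw [sum_filter_of_ne fun e _ h => by_contra fun he => h (eq_zero e he), sum_pair hne]
    _ ≤ ∑ e ∈ E with e.2 = t ∧ i.val ≤ e.1.val ∧ e.1.val < i.val + d, x e := by
        refine sum_le_sum_of_subset_of_nonneg (fun e he => ?_) fun e _ _ => nonneg e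
        simp only [mem_filter, mem_insert, mem_singleton] at he ⊢
        obtain ⟨rfl | rfl, heE⟩ := he <;> exact ⟨heE, rfl, by grind⟩
    _ ≤ 1 := window i t

theorem exists_partialMap (hx : FeasLP1 d E x) (w : Fin n × T → ℝ) :
    ∃ σ : Fin n → Option T, (∀ i, ∀ t ∈ σ i, (i, t) ∈ E) ∧
      (∀ i, σ i = none → ∑ e ∈ E with e.1 = i, x e < 1) ∧
      (2 ≤ d → ∀ i j : Fin n, i.val + 1 = j.val → σ i ≠ none → σ i ≠ σ j) ∧
      ∑ e ∈ E, w e * x e ≤ ∑ i, (σ i).elim 0 fun t => w (i, t) := by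
  have ⟨nonneg, eq_zero, degree, _⟩ := hx
  let row (i : Fin n) (t : E.image Prod.snd) : ℝ := x (i, t)
  have sum_row (i : Fin n) : ∑ e ∈ E with e.1 = i, x e = ∑ t, row i t :=
    sum_filter_fst_eq eq_zero i
  obtain ⟨s, hs, hsD, hle⟩ := exists_trajectory_not_repeating (p := fun i => withSlack (row i))
    (fun i => withSlack_mem_stdSimplex (fun t => nonneg (i, t)) (sum_row i ▸ degree i))
    {a | 2 ≤ d ∧ a ≠ none}
    (fun i j hij a ha => by
      obtain ⟨hd, ha⟩ := (mem_filter.1 ha).2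
      obtain ⟨t, rfl⟩ := Option.ne_none_iff_exists'.1 ha
      exact hx.add_le_one_of_adjacent hd hij t)
    (fun i a => a.elim 0 fun t => w (i, t))
  refine ⟨fun i => (s i).map Subtype.val, fun i t ht => ?_, fun i hi => ?_,
    fun hd i j hij hi heq => ?_, ?_⟩
  · obtain ⟨u, hu, rfl⟩ := Option.map_eq_some_iff.1 ht
    by_contra hE
    exact (hs i).ne' (by simp [hu, withSlack, row, eq_zero _ hE])
  · rw [sum_row]
    simpa [Option.map_eq_none_iff.1 hi, withSlack] using hs i
  · exact hsD i j hij (by simpa [hd] using hi) (Option.map_injective Subtype.val_injective heq)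
  · rw [sum_eq_sum_sum_image_snd fun e he => by rw [eq_zero e he, mul_zero]]
    simp only [withSlack_dotProduct] at hle
    simpa only [dotProduct, row, mul_comm, Option.elim_map, Function.comp_def] using hle

theorem exists_ddm (hx : FeasLP1 d E x) (hd : d ≤ 2) (w : Fin n × T → ℝ) :
    ∃ M, DDM d E M ∧ (∀ i, ∑ e ∈ E with e.1 = i, x e = 1 → ∃ t, (i, t) ∈ M) ∧
      ∑ e ∈ E, w e * x e ≤ ∑ e ∈ M, w e := by
  obtain ⟨σ, hE, hnone, hadj, hle⟩ := hx.exists_partialMap w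
  refine ⟨selectedEdges E σ, ddm_selectedEdges hd fun h => hadj h.ge, fun i hi => ?_,
    sum_selectedEdges hE w ▸ hle⟩
  obtain ⟨t, ht⟩ := Option.ne_none_iff_exists'.1 fun h => (hnone i h).ne hi
  exact ⟨t, mem_selectedEdges.2 ⟨hE i t ht, ht⟩⟩

end FeasLP1

theorem FeasLP2.exists_perfectDDM (hx : FeasLP2 d E x) (hd : d ≤ 2) (w : Fin n × T → ℝ) :
    ∃ M, PerfectDDM d E M ∧ ∑ e ∈ E, w e * x e ≤ ∑ e ∈ M, w e := by
  obtain ⟨M, hM, hcover, hle⟩ := hx.feasLP1.exists_ddm hd w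
  exact ⟨M, ⟨hM, fun i => hcover i (hx.2.2.1 i)⟩, hle⟩

end Rounding

theorem finite_setOf_ddm {n : ℕ} {T : Type*} [DecidableEq T] (d : ℕ) (E : Finset (Fin n × T)) :
    {M | DDM d E M}.Finite :=
  E.powerset.finite_toSet.subset fun _ hM => mem_powerset.2 hM.1

theorem ddm_empty {n : ℕ} {T : Type*} [DecidableEq T] (d : ℕ) (E : Finset (Fin n × T)) :
    DDM d E ∅ := by
  simp [DDM]

theorem exists_mem_forall_le_of_forall_exists_le {ι X R : Type*} [LinearOrder R] {s : Set ι}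
    (hs : s.Finite) (hne : s.Nonempty) {P : X → Prop} {c : X → R} {v : ι → R}
    (h : ∀ x, P x → ∃ i ∈ s, c x ≤ v i) : ∃ i ∈ s, ∀ x, P x → c x ≤ v i := by
  obtain ⟨i, hi, hmax⟩ := s.exists_max_image v hs hne
  refine ⟨i, hi, fun x hx => ?_⟩
  obtain ⟨j, hj, hle⟩ := h x hx
  exact hle.trans (hmax j hj)

/-- If `d = 1` or `d = 2`, then LP1 and LP2 are integral: for every weight function the
optimum of LP1 is attained at (the characteristic vector of) a `d`-distance matching,
and, whenever LP2 is feasible, its optimum is attained at a perfect `d`-distance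
matching. -/
theorem stmt8 {n : ℕ} {T : Type*} [DecidableEq T]
    (d : ℕ) (hd : d = 1 ∨ d = 2) (E : Finset (Fin n × T)) :
    ∀ w : Fin n × T → ℝ,
      (∃ M, DDM d E M ∧ ∀ x, FeasLP1 d E x → ∑ e ∈ E, w e * x e ≤ ∑ e ∈ M, w e) ∧
      ((∃ x, FeasLP2 d E x) → ∃ M, PerfectDDM d E M ∧
        ∀ x, FeasLP2 d E x → ∑ e ∈ E, w e * x e ≤ ∑ e ∈ M, w e) := by
  intro w
  have hd2 : d ≤ 2 := by omega
  constructor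
  · refine exists_mem_forall_le_of_forall_exists_le (finite_setOf_ddm d E) ⟨∅, ddm_empty d E⟩
      fun x hx => ?_
    obtain ⟨M, hM, -, hle⟩ := hx.exists_ddm hd2 w
    exact ⟨M, hM, hle⟩
  · rintro ⟨x₀, hx₀⟩
    obtain ⟨M₀, hM₀, -⟩ := hx₀.exists_perfectDDM hd2 w
    exact exists_mem_forall_le_of_forall_exists_le (s := {M | PerfectDDM d E M})
      ((finite_setOf_ddm d E).subset fun _ hM => hM.1) ⟨M₀, hM₀⟩
      fun x hx => hx.exists_perfectDDM hd2 w
end
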